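/- arXiv:1602.03307 — 4 statements merged into one kernel-verified Lean document; each statement's English description precedes it below -/
import Mathlib

section
/- Let σ : Fin n → ℝ be nonincreasing with σ₁ > 0, σⱼ ≥ 0 for all j, and let μ > 0. Define d₁ = σ₁² and dⱼ = (σ₁²/(σ₁²+μ²))·(σⱼ² + μ²) for 2 ≤ j ≤ n. Then max_j dⱼ = σ₁², min_j dⱼ = (σ₁²/(σ₁²+μ²))·(σₙ² + μ²), and (max_j dⱼ)/(min_j dⱼ) = (σ₁² + μ²)/(σₙ² + μ²). (In the paper: κ₂(AᵀA + L̃μᵀL̃μ) = κ₂(AᵀA + μ²I).) -/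
/-!
The factor `σ₁²/(σ₁²+μ²)` cancels at `j = 1`, so `dⱼ = (σ₁²/(σ₁²+μ²))(σⱼ²+μ²)` holds for every `j`.
Since `σ` is nonincreasing and nonnegative, `d` is nonincreasing; its maximum is the first entry and
its minimum the last one, and the common factor drops out of their ratio.
-/

/-- The diagonal entries `d₁ = σ₁²`, `dⱼ = (σ₁²/(σ₁²+μ²))(σⱼ²+μ²)` for `j ≥ 2` of
`AᵀA + L̃μᵀL̃μ` have maximum `σ₁²`, minimum `(σ₁²/(σ₁²+μ²))(σₙ²+μ²)`, and their ratio is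
`(σ₁²+μ²)/(σₙ²+μ²)`, i.e. `κ₂(AᵀA + L̃μᵀL̃μ) = κ₂(AᵀA + μ²I)`. -/
theorem stmt_9 (n : ℕ) (hn : 0 < n) (σ : Fin n → ℝ) (hσ : Antitone σ)
    (h1 : 0 < σ ⟨0, hn⟩) (hnn : ∀ j, 0 ≤ σ j) (μ : ℝ) (hμ : 0 < μ)
    (d : Fin n → ℝ)
    (hd : ∀ j : Fin n, d j = if (j : ℕ) = 0 then σ ⟨0, hn⟩ ^ 2
        else σ ⟨0, hn⟩ ^ 2 / (σ ⟨0, hn⟩ ^ 2 + μ ^ 2) * (σ j ^ 2 + μ ^ 2)) :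
    Finset.univ.sup' ⟨⟨0, hn⟩, Finset.mem_univ _⟩ d = σ ⟨0, hn⟩ ^ 2 ∧
      Finset.univ.inf' ⟨⟨0, hn⟩, Finset.mem_univ _⟩ d
        = σ ⟨0, hn⟩ ^ 2 / (σ ⟨0, hn⟩ ^ 2 + μ ^ 2) * (σ ⟨n - 1, by omega⟩ ^ 2 + μ ^ 2) ∧
      Finset.univ.sup' ⟨⟨0, hn⟩, Finset.mem_univ _⟩ d /
          Finset.univ.inf' ⟨⟨0, hn⟩, Finset.mem_univ _⟩ d
        = (σ ⟨0, hn⟩ ^ 2 + μ ^ 2) / (σ ⟨n - 1, by omega⟩ ^ 2 + μ ^ 2) := by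
  have hpos : 0 < σ ⟨0, hn⟩ ^ 2 + μ ^ 2 := by positivity
  -- The formula for `j ≥ 2` also gives `d₁ = σ₁²`, so the case split disappears.
  have hd' : ∀ j, d j = σ ⟨0, hn⟩ ^ 2 / (σ ⟨0, hn⟩ ^ 2 + μ ^ 2) * (σ j ^ 2 + μ ^ 2) := by
    intro j
    rw [hd j]
    split_ifs with hj
    · have hj0 : j = ⟨0, hn⟩ := Fin.ext hj
      rw [hj0, div_mul_cancel₀ _ hpos.ne']
    · rfl
  have hanti : Antitone d := by
    intro i j hij
    rw [hd' i, hd' j]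
    have h := hσ hij
    have hj := hnn j
    gcongr
  have hsup : Finset.univ.sup' ⟨⟨0, hn⟩, Finset.mem_univ _⟩ d = σ ⟨0, hn⟩ ^ 2 := by
    have h0 : d ⟨0, hn⟩ = σ ⟨0, hn⟩ ^ 2 := by simp [hd]
    rw [← h0]
    exact le_antisymm
      (Finset.sup'_le _ _ fun j _ => hanti (Fin.mk_le_of_le_val (Nat.zero_le _)))
      (Finset.le_sup' d (Finset.mem_univ _))
  have hinf : Finset.univ.inf' ⟨⟨0, hn⟩, Finset.mem_univ _⟩ d
      = σ ⟨0, hn⟩ ^ 2 / (σ ⟨0, hn⟩ ^ 2 + μ ^ 2) * (σ ⟨n - 1, by omega⟩ ^ 2 + μ ^ 2) := by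
    rw [← hd']
    exact le_antisymm (Finset.inf'_le d (Finset.mem_univ _))
      (Finset.le_inf' _ _ fun j _ => hanti (Fin.le_def.2 (Nat.le_sub_one_of_lt j.2)))
  refine ⟨hsup, hinf, ?_⟩
  rw [hsup, hinf]
  have hlast : 0 < σ ⟨n - 1, by omega⟩ ^ 2 + μ ^ 2 := by positivity
  field_simp
end

section
/- Let σ : Fin n → ℝ be nonincreasing with 0 ≤ σⱼ ≤ σ₁ for all j and σ₁ > 0, let 0 < μ < σ₁, and suppose k is such that σ₁·σⱼ ≤ μ² for all j with k+1 ≤ j ≤ n. Then (μ²/(σ₁² + μ²))·Σ_{j=k+1}^{n} (σ₁² − σⱼ²) ≤ Σ_{j=1}^{n} max{μ² − σⱼ², 0}. (In the paper: if σₖ > μ²/σ₁ ≥ σₖ₊₁, then ‖L̃μ,ₖ‖_F ≤ ‖Lμ‖_F.) -/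
/-! The inequality holds term by term. For `k ≤ j`, multiplying
`μ²(σ₁² − σⱼ²)/(σ₁² + μ²) ≤ μ² − σⱼ²` by `σ₁² + μ²` and cancelling leaves `σ₁²σⱼ² ≤ μ⁴`, the square
of the hypothesis on the trailing terms. The terms with `j < k` on the right are nonnegative. -/

/-- If `σ₁σⱼ ≤ μ²` for all `j` past `k`, then
`‖L̃μ,ₖ‖_F² = (μ²/(σ₁²+μ²))·Σ_{j>k}(σ₁²−σⱼ²) ≤ Σ_j max{μ²−σⱼ², 0} = ‖Lμ‖_F²`.
Indices are zero-based: `σ₁ = σ 0` and the trailing terms are those with `k ≤ j`. -/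
theorem stmt_12 (n : ℕ) (hn : 0 < n) (σ : Fin n → ℝ) (hσ : Antitone σ)
    (hnn : ∀ j, 0 ≤ σ j) (hle : ∀ j, σ j ≤ σ ⟨0, hn⟩) (h1 : 0 < σ ⟨0, hn⟩)
    (μ : ℝ) (hμ : 0 < μ) (hμ1 : μ < σ ⟨0, hn⟩) (k : ℕ)
    (hk : ∀ j : Fin n, k ≤ (j : ℕ) → σ ⟨0, hn⟩ * σ j ≤ μ ^ 2) :
    μ ^ 2 / (σ ⟨0, hn⟩ ^ 2 + μ ^ 2) *
        ∑ j ∈ Finset.univ.filter (fun j : Fin n => k ≤ (j : ℕ)),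
          (σ ⟨0, hn⟩ ^ 2 - σ j ^ 2)
      ≤ ∑ j : Fin n, max (μ ^ 2 - σ j ^ 2) 0 := by
  rw [Finset.mul_sum]
  refine (Finset.sum_le_sum fun j hj => ?_).trans
    (Finset.sum_le_sum_of_subset_of_nonneg (Finset.filter_subset _ _)
      fun j _ _ => le_max_right _ _)
  refine le_trans ?_ (le_max_left _ _)
  have h := hk j (Finset.mem_filter.mp hj).2
  -- After clearing the denominator the termwise bound is exactly `(σ₁ σⱼ)² ≤ (μ²)²`.
  have h2 : (σ ⟨0, hn⟩ * σ j) ^ 2 ≤ (μ ^ 2) ^ 2 :=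
    pow_le_pow_left₀ (mul_nonneg h1.le (hnn j)) h 2
  rw [div_mul_eq_mul_div, div_le_iff₀ (by positivity)]
  linarith
end

section
/- Let σ : Fin n → ℝ satisfy 0 ≤ σᵢ ≤ σ₁ for all i with σ₁ > 0, let μ > 0, let 0 ≤ k < n, and define f(θ) = (μ²/(σ₁² + θμ²))·Σ_{i=k+1}^{n} (σ₁² − θσᵢ²). Then f is nonincreasing on [0,1]: for all 0 ≤ θ₁ ≤ θ₂ ≤ 1 one has f(θ₂) ≤ f(θ₁). (In the paper: the squared Frobenius norm ‖Lμ,ₖ(θ)‖_F² is a nonincreasing function of θ.) -/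
/-- The squared Frobenius norm `f(θ) = (μ²/(σ₁²+θμ²))·Σ_{i>k}(σ₁²−θσᵢ²)` of the
θ-interpolated regularization matrix `Lμ,ₖ(θ)` is nonincreasing on `[0,1]`.
Indices are zero-based: `σ₁ = σ 0` and the sum runs over indices `i ≥ k`. -/
theorem stmt_15 (n : ℕ) (hn : 0 < n) (σ : Fin n → ℝ)
    (hnn : ∀ i, 0 ≤ σ i) (hle : ∀ i, σ i ≤ σ ⟨0, hn⟩) (h1 : 0 < σ ⟨0, hn⟩)
    (μ : ℝ) (hμ : 0 < μ) (k : ℕ) (hk : k < n)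
    (θ₁ θ₂ : ℝ) (h0 : 0 ≤ θ₁) (h12 : θ₁ ≤ θ₂) (h21 : θ₂ ≤ 1) :
    μ ^ 2 / (σ ⟨0, hn⟩ ^ 2 + θ₂ * μ ^ 2) *
        ∑ i ∈ Finset.univ.filter (fun i : Fin n => k ≤ (i : ℕ)),
          (σ ⟨0, hn⟩ ^ 2 - θ₂ * σ i ^ 2)
      ≤ μ ^ 2 / (σ ⟨0, hn⟩ ^ 2 + θ₁ * μ ^ 2) *
        ∑ i ∈ Finset.univ.filter (fun i : Fin n => k ≤ (i : ℕ)),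
          (σ ⟨0, hn⟩ ^ 2 - θ₁ * σ i ^ 2) := by
  have hs : 0 < σ ⟨0, hn⟩ ^ 2 := by positivity
  -- Both factors are nonincreasing in `θ`; nonnegativity of the sum at `θ₂` (from `θ₂ ≤ 1` and
  -- `σᵢ ≤ σ₁`) allows the two inequalities to be multiplied.
  refine mul_le_mul ?_ (Finset.sum_le_sum fun i _ => ?_) (Finset.sum_nonneg fun i _ => ?_)
    (by positivity)
  · gcongr
  · gcongr
  · have hi : σ i ^ 2 ≤ σ ⟨0, hn⟩ ^ 2 := pow_le_pow_left₀ (hnn i) (hle i) 2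
    have hθ : θ₂ * σ i ^ 2 ≤ σ i ^ 2 := mul_le_of_le_one_left (sq_nonneg _) h21
    linarith
end

section
/- Let U be an m×m real orthogonal matrix, V an n×n real orthogonal matrix (m ≥ n), σ : Fin n → ℝ, Σ the m×n matrix with Σᵢⱼ = σⱼ when i and j have equal index value and 0 otherwise, and A = UΣVᵀ. Let μ > 0, let Dμ be the n×n diagonal matrix with entries √(max{μ² − σⱼ², 0}), and set Lμ = DμVᵀ. Then the matrix M = ΣᵀΣ + Dμ² is invertible (its diagonal entries are max{σⱼ², μ²} > 0), and the vector xμ = V·M⁻¹·Σᵀ·Uᵀ·b satisfies (AᵀA + LμᵀLμ)·xμ = Aᵀ·b for every b ∈ ℝᵐ. -/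
/-!
`ΣᵀΣ` is diagonal with entries `σⱼ²` (this uses `n ≤ m`), so `M` is diagonal with entries
`σⱼ² + max (μ² - σⱼ²) 0 = max σⱼ² μ² > 0`, hence invertible. Orthogonality of `U` gives
`AᵀA + LᵀL = V M Vᵀ`, and orthogonality of `V` then collapses `V M Vᵀ V M⁻¹ Σᵀ Uᵀ` to
`V Σᵀ Uᵀ = Aᵀ`.
-/

open Matrix in
/-- With `A = UΣVᵀ` the SVD of `A`, `Dμ = diag[√(max{μ²−σⱼ², 0})]`, and
`Lμ = DμVᵀ`, the matrix `M = ΣᵀΣ + Dμ²` has diagonal entries `max{σⱼ², μ²}`,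
is invertible, and `xμ = V M⁻¹ Σᵀ Uᵀ b` satisfies the regularized normal
equations `(AᵀA + LμᵀLμ) xμ = Aᵀ b` for every `b`. -/
theorem stmt_18 (m n : ℕ) (hmn : n ≤ m)
    (U : Matrix (Fin m) (Fin m) ℝ) (hU : U * Uᵀ = 1) (hU' : Uᵀ * U = 1)
    (V : Matrix (Fin n) (Fin n) ℝ) (hV : V * Vᵀ = 1) (hV' : Vᵀ * V = 1)
    (σ : Fin n → ℝ)
    (S : Matrix (Fin m) (Fin n) ℝ)
    (hS : ∀ i j, S i j = if (i : ℕ) = (j : ℕ) then σ j else 0)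
    (A : Matrix (Fin m) (Fin n) ℝ) (hA : A = U * S * Vᵀ)
    (μ : ℝ) (hμ : 0 < μ)
    (D : Matrix (Fin n) (Fin n) ℝ)
    (hD : D = Matrix.diagonal fun j => Real.sqrt (max (μ ^ 2 - σ j ^ 2) 0))
    (L : Matrix (Fin n) (Fin n) ℝ) (hL : L = D * Vᵀ)
    (M : Matrix (Fin n) (Fin n) ℝ) (hM : M = Sᵀ * S + D * D) :
    (∀ j, M j j = max (σ j ^ 2) (μ ^ 2)) ∧ IsUnit M ∧
      ∀ b : Fin m → ℝ,
        (Aᵀ * A + Lᵀ * L).mulVec (V.mulVec (M⁻¹.mulVec (Sᵀ.mulVec (Uᵀ.mulVec b))))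
          = Aᵀ.mulVec b := by
  have hSS : Sᵀ * S = Matrix.diagonal fun j => σ j ^ 2 := by
    ext j k
    -- Column `j` of `S` is supported on the row with the same index value, which exists as `n ≤ m`.
    rw [Matrix.mul_apply, Finset.sum_eq_single (Fin.castLE hmn j)]
    · by_cases h : j = k
      · subst h
        simp [hS, sq]
      · have h' : (j : ℕ) ≠ (k : ℕ) := fun e => h (Fin.ext e)
        simp [hS, h, h']
    · intro i _ hi
      have h' : (i : ℕ) ≠ (j : ℕ) := fun e => hi (Fin.ext e)
      simp [hS, h']
    · simp
  have hMd : M = Matrix.diagonal fun j => max (σ j ^ 2) (μ ^ 2) := by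
    rw [hM, hSS, hD, Matrix.diagonal_mul_diagonal, Matrix.diagonal_add]
    congr 1
    funext j
    rw [Real.mul_self_sqrt (le_max_right _ _), ← max_add_add_left, add_zero,
      add_sub_cancel, max_comm]
  have hunit : IsUnit M := by
    rw [hMd, Matrix.isUnit_diagonal, Pi.isUnit_iff]
    intro j
    exact (lt_max_of_lt_right (pow_pos hμ 2)).ne'.isUnit
  refine ⟨fun j => by rw [hMd, Matrix.diagonal_apply_eq], hunit, fun b => ?_⟩
  have hDt : Dᵀ = D := by rw [hD, Matrix.diagonal_transpose]
  have hN : Aᵀ * A + Lᵀ * L = V * M * Vᵀ := by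
    have h1 : Aᵀ * A = V * (Sᵀ * S) * Vᵀ := by
      calc Aᵀ * A = V * Sᵀ * (Uᵀ * U) * S * Vᵀ := by
            simp only [hA, Matrix.transpose_mul, Matrix.transpose_transpose, Matrix.mul_assoc]
        _ = V * (Sᵀ * S) * Vᵀ := by
            simp only [hU', Matrix.mul_one, Matrix.mul_assoc]
    have h2 : Lᵀ * L = V * (D * D) * Vᵀ := by
      simp only [hL, Matrix.transpose_mul, Matrix.transpose_transpose, hDt, Matrix.mul_assoc]
    rw [h1, h2, hM, Matrix.mul_add, Matrix.add_mul]
  have hMM : M * M⁻¹ = 1 := Matrix.mul_nonsing_inv M ((Matrix.isUnit_iff_isUnit_det M).mp hunit)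
  simp only [Matrix.mulVec_mulVec]
  congr 1
  calc (Aᵀ * A + Lᵀ * L) * (V * (M⁻¹ * (Sᵀ * Uᵀ)))
      = V * M * (Vᵀ * V) * M⁻¹ * Sᵀ * Uᵀ := by simp only [hN, Matrix.mul_assoc]
    _ = V * (M * M⁻¹) * Sᵀ * Uᵀ := by simp only [hV', Matrix.mul_one, Matrix.mul_assoc]
    _ = Aᵀ := by
        simp only [hMM, hA, Matrix.mul_one, Matrix.transpose_mul, Matrix.transpose_transpose,
          Matrix.mul_assoc]
end
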